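/- arXiv:1707.08199 — 2 statements merged into one kernel-verified Lean document; each statement's English description precedes it below -/
import Mathlib

section
/- For every α > 0, the function A ↦ Λ(α,A) is non-decreasing and continuous on [0, |Ω|]. -/
open MeasureTheory ENNReal

noncomputable section

/-- The Euclidean Laplacian `Δu` of a function `u : ℝⁿ → ℝ`. -/
def lap {n : ℕ} (u : EuclideanSpace ℝ (Fin n) → ℝ) (x : EuclideanSpace ℝ (Fin n)) : ℝ :=
  ∑ i : Fin n, iteratedFDeriv ℝ 2 u x ![EuclideanSpace.single i 1, EuclideanSpace.single i 1]

/-- Smooth compactly supported test functions on `Ω`, not identically zero. -/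
def TestFun {n : ℕ} (Ω : Set (EuclideanSpace ℝ (Fin n)))
    (u : EuclideanSpace ℝ (Fin n) → ℝ) : Prop :=
  ContDiff ℝ (⊤ : ℕ∞) u ∧ HasCompactSupport u ∧ tsupport u ⊆ Ω ∧ u ≠ 0

/-- The generalized composite plate eigenvalue
`Λ(α,A) = inf_S inf_u (∫_Ω (Δu)² + α ∫_S u²) / ∫_Ω u²`,
the infima being over measurable `S ⊆ Ω` with `|S| = A` and over smooth compactly
supported `u : Ω → ℝ`, `u ≢ 0`. -/
def Lam {n : ℕ} (Ω : Set (EuclideanSpace ℝ (Fin n))) (α A : ℝ) : ℝ :=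
  sInf { r : ℝ | ∃ S : Set (EuclideanSpace ℝ (Fin n)), MeasurableSet S ∧ S ⊆ Ω ∧
      volume S = ENNReal.ofReal A ∧
      ∃ u : EuclideanSpace ℝ (Fin n) → ℝ, TestFun Ω u ∧
        r = ((∫ x in Ω, lap u x ^ 2) + α * ∫ x in S, u x ^ 2) / ∫ x in Ω, u x ^ 2 }

theorem exists_sub {n : ℕ} (hn : 2 ≤ n) (S : Set (EuclideanSpace ℝ (Fin n)))
    (hS : MeasurableSet S) (hb : Bornology.IsBounded S) (b : ℝ) (h0 : 0 ≤ b)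
    (h1 : b ≤ volume.real S) :
    ∃ T, T ⊆ S ∧ MeasurableSet T ∧ volume.real T = b := by
  have : Nonempty (Fin n) := ⟨⟨0, by omega⟩⟩
  obtain ⟨R, hR⟩ := hb.subset_closedBall (0 : EuclideanSpace ℝ (Fin n))
  have hR0 : S ⊆ Metric.closedBall (0 : EuclideanSpace ℝ (Fin n)) (max R 0) :=
    hR.trans (Metric.closedBall_subset_closedBall (le_max_left _ _))
  set R' := max R 0
  have hR'0 : 0 ≤ R' := le_max_right _ _
  let f : ℝ → ℝ := fun r => volume.real (S ∩ Metric.closedBall 0 r)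
  let g : ℝ → ℝ := fun r => volume.real (Metric.closedBall (0 : EuclideanSpace ℝ (Fin n)) r)
  have hg : ContinuousOn g (Set.Icc 0 R') := by
    have : Set.EqOn g (fun r => r ^ n * volume.real (Metric.ball (0 : EuclideanSpace ℝ (Fin n)) 1))
        (Set.Icc 0 R') := by
      intro r hr
      simp only [g]
      rw [Measure.addHaar_real_closedBall _ _ hr.1]
      simp
    exact ContinuousOn.congr (by fun_prop) this
  have hfin : ∀ r, volume (Metric.closedBall (0 : EuclideanSpace ℝ (Fin n)) r) ≠ ⊤ :=
    fun r => measure_closedBall_lt_top.ne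
  have key : ∀ r s, r ≤ s → 0 ≤ f s - f r ∧ f s - f r ≤ g s - g r := by
    intro r s hrs
    have hsub : Metric.closedBall (0 : EuclideanSpace ℝ (Fin n)) r ⊆ Metric.closedBall 0 s :=
      Metric.closedBall_subset_closedBall hrs
    have e1 : f s - f r = volume.real ((S ∩ Metric.closedBall 0 s) \ (S ∩ Metric.closedBall 0 r)) := by
      rw [measureReal_sdiff (by gcongr) (hS.inter measurableSet_closedBall)
        (measure_ne_top_of_subset Set.inter_subset_right (hfin s))]
    have e2 : g s - g r = volume.real ((Metric.closedBall (0 : EuclideanSpace ℝ (Fin n)) s) \ (Metric.closedBall 0 r)) := by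
      rw [measureReal_sdiff hsub measurableSet_closedBall (hfin s)]
    rw [e1, e2]
    refine ⟨measureReal_nonneg, measureReal_mono ?_ (measure_ne_top_of_subset Set.sdiff_subset (hfin s))⟩
    intro x hx
    exact ⟨hx.1.2, fun h => hx.2 ⟨hx.1.1, h⟩⟩
  have hf : ContinuousOn f (Set.Icc 0 R') := by
    intro r hr
    have := hg r hr
    rw [ContinuousWithinAt, tendsto_iff_dist_tendsto_zero] at this ⊢
    refine squeeze_zero (fun _ => dist_nonneg) (fun s => ?_) this
    rw [Real.dist_eq, Real.dist_eq]
    rcases le_total r s with h | h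
    · have := key r s h
      rw [abs_of_nonneg this.1]; exact this.2.trans (le_abs_self _)
    · have := key s r h
      rw [abs_sub_comm, abs_sub_comm (g s), abs_of_nonneg this.1]; exact this.2.trans (le_abs_self _)
  have hf0 : f 0 = 0 := by
    simp only [f, Metric.closedBall_zero]
    rw [measureReal_def, measure_mono_null Set.inter_subset_right (measure_singleton _)]
    rfl
  have hf1 : f R' = volume.real S := by
    simp only [f]; rw [Set.inter_eq_left.2 hR0]
  obtain ⟨r, hr, hrb⟩ := intermediate_value_Icc hR'0 hf (show b ∈ Set.Icc (f 0) (f R') by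
    rw [hf0, hf1]; exact ⟨h0, h1⟩)
  exact ⟨_, Set.inter_subset_left, hS.inter measurableSet_closedBall, hrb⟩

theorem lap_facts {n : ℕ} (u : EuclideanSpace ℝ (Fin n) → ℝ) (hu : ContDiff ℝ (⊤ : ℕ∞) u) :
    Continuous (lap u) ∧ ∀ x, x ∉ tsupport u → lap u x = 0 := by
  constructor
  · unfold lap
    refine continuous_finsetSum _ fun i _ => ?_
    have := hu.continuous_iteratedFDeriv (m := 2) (WithTop.coe_le_coe.2 (le_top : (2 : ℕ∞) ≤ ⊤))
    fun_prop
  · intro x hx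
    have : iteratedFDeriv ℝ 2 u x = 0 := by
      by_contra h
      exact hx (tsupport_iteratedFDeriv_subset (𝕜 := ℝ) (f := u) 2 (subset_tsupport _ h))
    simp [lap, this]

theorem sq_cs {n : ℕ} {f : EuclideanSpace ℝ (Fin n) → ℝ} (hc : HasCompactSupport f) :
    HasCompactSupport (fun x => f x ^ 2) :=
  HasCompactSupport.intro hc (fun x hx => by simp [image_eq_zero_of_notMem_tsupport hx])

theorem sq_int {n : ℕ} {f : EuclideanSpace ℝ (Fin n) → ℝ} (hf : Continuous f)
    (hc : HasCompactSupport f) : Integrable (fun x => f x ^ 2) :=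
  Continuous.integrable_of_hasCompactSupport (by fun_prop) (sq_cs hc)

theorem lap_cs {n : ℕ} (u : EuclideanSpace ℝ (Fin n) → ℝ) (hu : ContDiff ℝ (⊤ : ℕ∞) u)
    (hc : HasCompactSupport u) : HasCompactSupport (lap u) :=
  HasCompactSupport.intro hc (fun x hx => (lap_facts u hu).2 x hx)

theorem grad_est {n : ℕ} (u : EuclideanSpace ℝ (Fin n) → ℝ) (hu : ContDiff ℝ (⊤ : ℕ∞) u)
    (hc : HasCompactSupport u) :
    ContDiff ℝ 1 (fun x => u x ^ 2) ∧ HasCompactSupport (fun x => u x ^ 2) ∧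
    Integrable (fun x => u x ^ 2) ∧ Integrable (fderiv ℝ (fun x => u x ^ 2)) ∧
    ∫ x, ‖fderiv ℝ (fun x => u x ^ 2) x‖ ≤ (n + 1) * ((∫ x, u x ^ 2) + ∫ x, lap u x ^ 2) := by
  obtain ⟨D, D_def⟩ : ∃ D : Fin n → EuclideanSpace ℝ (Fin n) → ℝ,
      D = fun i x => fderiv ℝ u x (EuclideanSpace.single i 1) := ⟨_, rfl⟩
  have hfd : ContDiff ℝ (⊤ : ℕ∞) (fderiv ℝ u) := hu.fderiv_right (by simp)
  have hDs : ∀ i, ContDiff ℝ (⊤ : ℕ∞) (D i) := fun i => by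
    rw [D_def]; exact hfd.clm_apply contDiff_const
  have hDc : ∀ i, HasCompactSupport (D i) := fun i => by
    rw [D_def]
    exact (hc.fderiv (𝕜 := ℝ)).comp_left (g := fun L : (EuclideanSpace ℝ (Fin n)) →L[ℝ] ℝ => L (EuclideanSpace.single i 1)) (by simp)
  have hlap : ∀ x, lap u x = ∑ i, fderiv ℝ (D i) x (EuclideanSpace.single i 1) := by
    intro x
    refine Finset.sum_congr rfl fun i _ => ?_
    rw [iteratedFDeriv_two_apply]
    rw [D_def]
    have : fderiv ℝ (fun x => fderiv ℝ u x (EuclideanSpace.single i 1)) x = _ := ((hfd.differentiable (by simp) x).hasFDerivAt.clm_apply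
      (hasFDerivAt_const (EuclideanSpace.single i 1) x)).fderiv
    rw [this]; simp
  have hlc := (lap_facts u hu).1
  have hlcs := lap_cs u hu hc
  have iu2 : Integrable (fun x => u x ^ 2) := sq_int hu.continuous hc
  have il2 : Integrable (fun x => lap u x ^ 2) := sq_int hlc hlcs
  have iD2 : ∀ i, Integrable (fun x => D i x ^ 2) := fun i => sq_int (hDs i).continuous (hDc i)
  have hDDc : ∀ i, Continuous (fun x => fderiv ℝ (D i) x (EuclideanSpace.single i 1)) := fun i =>
    ((hDs i).continuous_fderiv (by simp)).clm_apply continuous_const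
  have iuDD : ∀ i, Integrable (fun x => u x * fderiv ℝ (D i) x (EuclideanSpace.single i 1)) := fun i =>
    (hu.continuous.mul (hDDc i)).integrable_of_hasCompactSupport hc.mul_right
  have ibp : ∀ i, ∫ x, u x * fderiv ℝ (D i) x (EuclideanSpace.single i 1) = - ∫ x, D i x ^ 2 := by
    intro i
    rw [integral_mul_fderiv_eq_neg_fderiv_mul_of_integrable]
    · simp only [sq, D_def]
    · simpa only [sq, D_def] using iD2 i
    · exact iuDD i
    · exact (hu.continuous.mul (hDs i).continuous).integrable_of_hasCompactSupport hc.mul_right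
    · exact fun x _ => hu.differentiable (by simp) x
    · exact fun x _ => (hDs i).differentiable (by simp) x
  have hgrad : ∑ i, ∫ x, D i x ^ 2 ≤ ((∫ x, u x ^ 2) + ∫ x, lap u x ^ 2) / 2 := by
    have e : ∑ i, ∫ x, D i x ^ 2 = ∫ x, -(u x * lap u x) := by
      rw [integral_neg]
      simp_rw [hlap, Finset.mul_sum]
      rw [integral_finsetSum _ (fun i _ => iuDD i), ← Finset.sum_neg_distrib]
      simp_rw [ibp, neg_neg]
    rw [e, ← integral_add iu2 il2, ← integral_div]
    refine integral_mono ?_ ((iu2.add il2).div_const 2) fun x => ?_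
    · exact ((hu.continuous.mul hlc).integrable_of_hasCompactSupport hc.mul_right).neg
    · simp only []
      nlinarith [sq_nonneg (u x + lap u x)]
  -- the function u²
  have hv : ContDiff ℝ 1 (fun x => u x ^ 2) := (hu.of_le (by simp)).pow 2
  have hvc : HasCompactSupport (fun x => u x ^ 2) := sq_cs hc
  have hfdv : ∀ x, ‖fderiv ℝ (fun x => u x ^ 2) x‖ ≤ n * u x ^ 2 + ∑ i, D i x ^ 2 := by
    intro x
    have h1 : fderiv ℝ (fun x => u x ^ 2) x = (2 * u x) • fderiv ℝ u x := by
      have := ((hu.differentiable (by simp) x).hasFDerivAt.pow 2).fderiv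
      rw [this]; simp
    have h2 : ‖fderiv ℝ u x‖ ≤ ∑ i, |D i x| := by
      refine ContinuousLinearMap.opNorm_le_bound _ (Finset.sum_nonneg fun i _ => abs_nonneg _) fun y => ?_
      have hy : y = ∑ i, y i • (EuclideanSpace.single i (1 : ℝ)) := by
        ext j; simp [Finset.sum_apply, Pi.single_apply]
      conv_lhs => rw [hy]
      rw [map_sum, Finset.sum_mul]
      refine (norm_sum_le _ _).trans (Finset.sum_le_sum fun i _ => ?_)
      rw [map_smul, norm_smul, mul_comm, D_def]
      exact mul_le_mul_of_nonneg_left (PiLp.norm_apply_le y i) (abs_nonneg _)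
    rw [h1, norm_smul]
    calc ‖2 * u x‖ * ‖fderiv ℝ u x‖ ≤ ‖2 * u x‖ * ∑ i, |D i x| := by gcongr
      _ = ∑ i, 2 * |u x| * |D i x| := by
        rw [Finset.mul_sum]; simp [abs_mul]
      _ ≤ ∑ i : Fin n, (u x ^ 2 + D i x ^ 2) := by
        refine Finset.sum_le_sum fun i _ => ?_
        nlinarith [sq_nonneg (|u x| - |D i x|), sq_abs (u x), sq_abs (D i x)]
      _ = _ := by simp [Finset.sum_add_distrib]
  have hfc : Continuous (fderiv ℝ (fun x => u x ^ 2)) := hv.continuous_fderiv (by simp)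
  have ifd : Integrable (fderiv ℝ (fun x => u x ^ 2)) :=
    hfc.integrable_of_hasCompactSupport (hvc.fderiv (𝕜 := ℝ))
  have hI : ∫ x, ‖fderiv ℝ (fun x => u x ^ 2) x‖ ≤ (n + 1) * ((∫ x, u x ^ 2) + ∫ x, lap u x ^ 2) := by
    have h1 : ∫ x, ‖fderiv ℝ (fun x => u x ^ 2) x‖ ≤ ∫ x, (n * u x ^ 2 + ∑ i, D i x ^ 2) :=
      integral_mono ifd.norm ((iu2.const_mul _).add (integrable_finsetSum _ fun i _ => iD2 i)) hfdv
    rw [integral_add (iu2.const_mul _) (integrable_finsetSum _ fun i _ => iD2 i),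
      integral_finsetSum _ (fun i _ => iD2 i), integral_const_mul] at h1
    have a1 : 0 ≤ ∫ x, u x ^ 2 := integral_nonneg fun x => sq_nonneg _
    have a2 : 0 ≤ ∫ x, lap u x ^ 2 := integral_nonneg fun x => sq_nonneg _
    have a3 : 0 ≤ (n : ℝ) * ∫ x, lap u x ^ 2 := by positivity
    nlinarith
  exact ⟨hv, hvc, iu2, ifd, hI⟩

theorem sobolev {n : ℕ} (hn : 2 ≤ n) : ∃ C e : ℝ, 0 ≤ C ∧ 0 < e ∧
    ∀ u : EuclideanSpace ℝ (Fin n) → ℝ, ContDiff ℝ (⊤ : ℕ∞) u → HasCompactSupport u →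
    ∀ T : Set (EuclideanSpace ℝ (Fin n)), volume T ≠ ⊤ →
      ∫ x in T, u x ^ 2 ≤ C * volume.real T ^ e * ((∫ x, u x ^ 2) + ∫ x, lap u x ^ 2) := by
  have hfr : Module.finrank ℝ (EuclideanSpace ℝ (Fin n)) = n := by simp
  have hn1 : (1 : NNReal) < (Module.finrank ℝ (EuclideanSpace ℝ (Fin n)) : NNReal) := by
    rw [hfr]; exact_mod_cast hn
  obtain ⟨p, hp⟩ : ∃ p : NNReal,
      NNReal.HolderConjugate (Module.finrank ℝ (EuclideanSpace ℝ (Fin n)) : NNReal) p :=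
    ⟨_, NNReal.HolderConjugate.conjExponent hn1⟩
  have hp1 : 1 < p := hp.symm.lt
  have hp1' : (1 : ℝ) < p := by exact_mod_cast hp1
  obtain ⟨c, hcc⟩ : ∃ c : NNReal, ∀ v : EuclideanSpace ℝ (Fin n) → ℝ, ContDiff ℝ 1 v →
      HasCompactSupport v → eLpNorm v p volume ≤ c * eLpNorm (fderiv ℝ v) 1 volume :=
    ⟨_, fun v hv hvc => eLpNorm_le_eLpNorm_fderiv_one volume hv hvc hp⟩
  refine ⟨c * (n + 1), 1 - 1 / (p : ℝ), by positivity, ?_, ?_⟩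
  · rw [sub_pos, div_lt_one (by linarith)]; exact hp1'
  intro u hu hc T hT
  obtain ⟨hv, hvc, iu2, ifd, hI⟩ := grad_est u hu hc
  have hA := eLpNorm_le_eLpNorm_mul_rpow_measure_univ (μ := volume.restrict T) (p := 1) (q := p)
    (f := fun x => u x ^ 2) (by exact_mod_cast hp1.le) hv.continuous.aestronglyMeasurable
  have hB := hcc _ hv hvc
  have hC := hA.trans (mul_le_mul_left ((eLpNorm_mono_measure _ Measure.restrict_le_self).trans hB) _)
  rw [Measure.restrict_apply_univ] at hC
  have e1 : eLpNorm (fun x => u x ^ 2) 1 (volume.restrict T) = ENNReal.ofReal (∫ x in T, u x ^ 2) := by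
    rw [eLpNorm_one_eq_lintegral_enorm, ← ofReal_integral_norm_eq_lintegral_enorm iu2.restrict]
    simp
  have e2 : eLpNorm (fderiv ℝ (fun x => u x ^ 2)) 1 volume = ENNReal.ofReal (∫ x, ‖fderiv ℝ (fun x => u x ^ 2) x‖) := by
    rw [eLpNorm_one_eq_lintegral_enorm, ← ofReal_integral_norm_eq_lintegral_enorm ifd]
  have hpos : 0 ≤ 1 - 1 / (p : ℝ) := by
    have : (1 : ℝ) < p := by exact_mod_cast hp1
    rw [sub_nonneg, div_le_one (by linarith)]; exact this.le
  have hI0 : 0 ≤ ∫ x, ‖fderiv ℝ (fun x => u x ^ 2) x‖ := integral_nonneg fun x => norm_nonneg _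
  have hD := ENNReal.toReal_mono (by
    rw [e2]
    refine ENNReal.mul_ne_top (ENNReal.mul_ne_top ENNReal.coe_ne_top ENNReal.ofReal_ne_top) ?_
    exact ENNReal.rpow_ne_top_of_nonneg (by simpa using hpos) hT) hC
  rw [e1, e2, ENNReal.toReal_mul, ENNReal.toReal_mul, ← ENNReal.toReal_rpow,
    ENNReal.toReal_ofReal (integral_nonneg fun x => sq_nonneg _), ENNReal.toReal_ofReal hI0] at hD
  simp only [ENNReal.coe_toReal, ENNReal.toReal_one, div_one] at hD
  refine hD.trans ?_
  change c * _ * volume.real T ^ _ ≤ _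
  calc _ ≤ c * ((n + 1) * ((∫ x, u x ^ 2) + ∫ x, lap u x ^ 2)) * volume.real T ^ (1 - 1 / (p : ℝ)) := by
        gcongr
    _ = _ := by ring

section Main

variable {n : ℕ} {Ω : Set (EuclideanSpace ℝ (Fin n))}

theorem exists_test (hne : Ω.Nonempty) (hΩo : IsOpen Ω) : ∃ u, TestFun Ω u := by
  obtain ⟨x, hx⟩ := hne
  obtain ⟨f, h1, h2, h3, -, h5⟩ := exists_contDiff_tsupport_subset (n := ⊤) (hΩo.mem_nhds hx)
  exact ⟨f, h3, h2, h1, fun h => by simp [h] at h5⟩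

theorem test_facts {u : EuclideanSpace ℝ (Fin n) → ℝ} (hu : TestFun Ω u) :
    Integrable (fun x => u x ^ 2) ∧ 0 < ∫ x in Ω, u x ^ 2 ∧
    ∫ x in Ω, u x ^ 2 = ∫ x, u x ^ 2 ∧ ∫ x in Ω, lap u x ^ 2 = ∫ x, lap u x ^ 2 := by
  obtain ⟨h1, h2, h3, h4⟩ := hu
  have e : ∫ x in Ω, u x ^ 2 = ∫ x, u x ^ 2 := by
    refine setIntegral_eq_integral_of_forall_compl_eq_zero fun x hx => ?_
    rw [image_eq_zero_of_notMem_tsupport (fun h => hx (h3 h))]; simp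
  refine ⟨sq_int h1.continuous h2, ?_, e, ?_⟩
  · rw [e]
    obtain ⟨x, hx⟩ := Function.ne_iff.1 h4
    refine Continuous.integral_pos_of_hasCompactSupport_nonneg_nonzero (x := x)
      (h1.continuous.pow 2) (sq_cs h2) (fun y => sq_nonneg _) ?_
    exact pow_ne_zero 2 hx
  · refine setIntegral_eq_integral_of_forall_compl_eq_zero fun x hx => ?_
    rw [(lap_facts u h1).2 x (fun h => hx (h3 h))]; simp

theorem Lam_le {α A : ℝ} (hα : 0 < α) (hA : 0 ≤ A) (hfin : volume Ω ≠ ⊤)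
    {S : Set (EuclideanSpace ℝ (Fin n))} (hS : MeasurableSet S) (hSΩ : S ⊆ Ω)
    (hSA : volume.real S = A) {u : EuclideanSpace ℝ (Fin n) → ℝ} (hu : TestFun Ω u) :
    Lam Ω α A ≤ ((∫ x in Ω, lap u x ^ 2) + α * ∫ x in S, u x ^ 2) / ∫ x in Ω, u x ^ 2 := by
  refine csInf_le ⟨0, ?_⟩ ⟨S, hS, hSΩ, ?_, u, hu, rfl⟩
  · rintro r ⟨S, -, -, -, u, -, rfl⟩
    have h1 : 0 ≤ ∫ x in Ω, lap u x ^ 2 := integral_nonneg fun x => sq_nonneg _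
    have h2 : 0 ≤ ∫ x in S, u x ^ 2 := integral_nonneg fun x => sq_nonneg _
    have h3 : 0 ≤ ∫ x in Ω, u x ^ 2 := integral_nonneg fun x => sq_nonneg _
    positivity
  · rw [← hSA, ofReal_measureReal (measure_ne_top_of_subset hSΩ hfin)]

theorem le_Lam (hn : 2 ≤ n) (hne : Ω.Nonempty) (hΩo : IsOpen Ω) (hΩb : Bornology.IsBounded Ω)
    {α A c : ℝ} (hA : 0 ≤ A) (hA' : A ≤ volume.real Ω)
    (h : ∀ S u, MeasurableSet S → S ⊆ Ω → volume.real S = A → TestFun Ω u →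
      c ≤ ((∫ x in Ω, lap u x ^ 2) + α * ∫ x in S, u x ^ 2) / ∫ x in Ω, u x ^ 2) :
    c ≤ Lam Ω α A := by
  have hfin : volume Ω ≠ ⊤ := hΩb.measure_lt_top.ne
  refine le_csInf ?_ ?_
  · obtain ⟨u, hu⟩ := exists_test hne hΩo
    obtain ⟨S, h1, h2, h3⟩ := exists_sub hn Ω hΩo.measurableSet hΩb A hA hA'
    exact ⟨_, S, h2, h1, by rw [← h3, ofReal_measureReal (measure_ne_top_of_subset h1 hfin)],
      u, hu, rfl⟩
  · rintro r ⟨S, h1, h2, h3, u, hu, rfl⟩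
    exact h S u h1 h2 (by rw [measureReal_def, h3, ENNReal.toReal_ofReal hA]) hu

theorem Lam_mono (hn : 2 ≤ n) (hne : Ω.Nonempty) (hΩo : IsOpen Ω) (hΩb : Bornology.IsBounded Ω)
    {α A B : ℝ} (hα : 0 < α) (hA : 0 ≤ A) (hAB : A ≤ B) (hB : B ≤ volume.real Ω) :
    Lam Ω α A ≤ Lam Ω α B := by
  have hfin : volume Ω ≠ ⊤ := hΩb.measure_lt_top.ne
  refine le_Lam hn hne hΩo hΩb (hA.trans hAB) hB fun S u hS hSΩ hSB hu => ?_
  obtain ⟨T, h1, h2, h3⟩ := exists_sub hn S hS (hΩb.subset hSΩ) A hA (hSB ▸ hAB)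
  refine (Lam_le hα hA hfin h2 (h1.trans hSΩ) h3 hu).trans ?_
  obtain ⟨i1, i2, -, -⟩ := test_facts hu
  have : ∫ x in T, u x ^ 2 ≤ ∫ x in S, u x ^ 2 :=
    setIntegral_mono_set i1.integrableOn (Filter.Eventually.of_forall fun x => sq_nonneg _)
      (Filter.Eventually.of_forall h1)
  gcongr

/-- Interior estimate: Markov's inequality finds room where `u²` is small. -/
theorem Lam_lip (hn : 2 ≤ n) (hne : Ω.Nonempty) (hΩo : IsOpen Ω) (hΩb : Bornology.IsBounded Ω)
    {α A B : ℝ} (hα : 0 < α) (hA : 0 ≤ A) (hAB : A ≤ B) (hAV : A < volume.real Ω)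
    (hB : B - A ≤ (volume.real Ω - A) / 2) :
    Lam Ω α B ≤ Lam Ω α A + 2 * α * (B - A) / (volume.real Ω - A) := by
  have hfin : volume Ω ≠ ⊤ := hΩb.measure_lt_top.ne
  rw [← sub_le_iff_le_add]
  refine le_Lam hn hne hΩo hΩb hA hAV.le fun S u hS hSΩ hSA hu => ?_
  rw [sub_le_iff_le_add]
  obtain ⟨i1, i2, i3, -⟩ := test_facts hu
  set U := ∫ x in Ω, u x ^ 2 with hU
  set b := volume.real Ω - A with hb
  have hb0 : 0 < b := by linarith
  have hfS : volume S ≠ ⊤ := measure_ne_top_of_subset hSΩ hfin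
  -- where u² is large
  have hu2m : Measurable (fun x => u x ^ 2) := (hu.1.continuous.pow 2).measurable
  have hM := mul_meas_ge_le_integral_of_nonneg (μ := volume.restrict Ω) (f := fun x => u x ^ 2)
    (Filter.Eventually.of_forall fun x => sq_nonneg _) i1.integrableOn (2 * U / b)
  have hLm : MeasurableSet {x | 2 * U / b ≤ u x ^ 2} := measurableSet_le measurable_const hu2m
  rw [measureReal_restrict_apply hLm, ← hU] at hM
  set L := {x | 2 * U / b ≤ u x ^ 2} ∩ Ω with hL
  have hLΩ : L ⊆ Ω := Set.inter_subset_right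
  have hLm' : MeasurableSet L := hLm.inter hΩo.measurableSet
  have hLb : volume.real L ≤ b / 2 := by
    have : 2 * U / b * volume.real L ≤ 2 * U / b * (b / 2) := by
      refine hM.trans (le_of_eq ?_); field_simp
    exact le_of_mul_le_mul_left this (by positivity)
  have hG : B - A ≤ volume.real (Ω \ (S ∪ L)) := by
    rw [measureReal_sdiff (Set.union_subset hSΩ hLΩ) (hS.union hLm') hfin]
    have := measureReal_union_le (μ := volume) S L
    linarith
  obtain ⟨T, h1, h2, h3⟩ := exists_sub hn _ (hΩo.measurableSet.diff (hS.union hLm'))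
    (hΩb.subset Set.sdiff_subset) (B - A) (by linarith) hG
  have hTΩ : T ⊆ Ω := h1.trans Set.sdiff_subset
  have hfT : volume T ≠ ⊤ := measure_ne_top_of_subset hTΩ hfin
  have hdis : Disjoint S T := Set.disjoint_left.2 fun x hx hxT => (h1 hxT).2 (Or.inl hx)
  have hmeas : volume.real (S ∪ T) = B := by
    rw [measureReal_union hdis h2 hfS hfT]; linarith
  refine (Lam_le hα (hA.trans hAB) hfin (hS.union h2) (Set.union_subset hSΩ hTΩ) hmeas hu).trans ?_
  rw [setIntegral_union hdis h2 i1.integrableOn i1.integrableOn]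
  have hT : ∫ x in T, u x ^ 2 ≤ 2 * U / b * (B - A) := by
    have : ∫ x in T, u x ^ 2 ≤ ∫ x in T, 2 * U / b := by
      refine setIntegral_mono_on i1.integrableOn (integrableOn_const hfT) h2 fun x hx => ?_
      by_contra hcon
      exact (h1 hx).2 (Or.inr ⟨(not_le.1 hcon).le, hTΩ hx⟩)
    rw [setIntegral_const, h3, smul_eq_mul] at this
    linarith
  rw [← hU, div_le_iff₀ i2, add_mul, div_mul_cancel₀ _ i2.ne']
  have h4 : α * ∫ x in T, u x ^ 2 ≤ α * (2 * U / b * (B - A)) := by gcongr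
  have h5 : α * (2 * U / b * (B - A)) = 2 * α * (B - A) / b * U := by ring
  linarith

/-- Estimate at the right end point. -/
theorem Lam_end (hn : 2 ≤ n) (hne : Ω.Nonempty) (hΩo : IsOpen Ω) (hΩb : Bornology.IsBounded Ω)
    {α : ℝ} (hα : 0 < α) : ∃ C e : ℝ, 0 < e ∧ ∀ A, 0 ≤ A → A ≤ volume.real Ω →
      α * (C * (volume.real Ω - A) ^ e) ≤ 1 →
      Lam Ω α (volume.real Ω) - α * (C * (volume.real Ω - A) ^ e) *
        (Lam Ω α (volume.real Ω) - α + 1) ≤ Lam Ω α A := by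
  have hfin : volume Ω ≠ ⊤ := hΩb.measure_lt_top.ne
  obtain ⟨C, e, hC, he, H⟩ := sobolev hn
  refine ⟨C, e, he, fun A hA hAV hsmall => ?_⟩
  refine le_Lam hn hne hΩo hΩb hA hAV fun S u hS hSΩ hSA hu => ?_
  have hfS : volume S ≠ ⊤ := measure_ne_top_of_subset hSΩ hfin
  obtain ⟨i1, i2, i3, i4⟩ := test_facts hu
  have h1 := Lam_le hα measureReal_nonneg hfin hΩo.measurableSet subset_rfl rfl hu
  have h2 := H u hu.1 hu.2.1 (Ω \ S) (measure_ne_top_of_subset Set.sdiff_subset hfin)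
  rw [measureReal_sdiff hSΩ hS hfin, hSA, ← i3, ← i4,
    setIntegral_sdiff hS i1.integrableOn hSΩ] at h2
  set U := ∫ x in Ω, u x ^ 2
  set D := ∫ x in Ω, lap u x ^ 2
  set K := C * (volume.real Ω - A) ^ e
  set Λ := Lam Ω α (volume.real Ω)
  rw [le_div_iff₀ i2] at h1 ⊢
  -- h1 : Λ U ≤ D + α U, h2 : U - ∫_S ≤ K (U + D)
  have h3 := mul_le_mul_of_nonneg_left h1 (sub_nonneg.2 hsmall)
  have h4 := mul_le_mul_of_nonneg_left h2 hα.le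
  nlinarith

theorem main_cont (hn : 2 ≤ n) (hne : Ω.Nonempty) (hΩo : IsOpen Ω) (hΩb : Bornology.IsBounded Ω)
    {α : ℝ} (hα : 0 < α) :
    ContinuousOn (fun A => Lam Ω α A) (Set.Icc (0 : ℝ) (volume.real Ω)) := by
  intro A₀ hA₀
  rcases hA₀.2.lt_or_eq with hlt | heq
  · set b := volume.real Ω - A₀ with hb
    have hb0 : 0 < b := by linarith
    rw [ContinuousWithinAt, tendsto_iff_dist_tendsto_zero]
    have hlim : Filter.Tendsto (fun A => 2 * α * |A - A₀| / b)
        (nhdsWithin A₀ (Set.Icc 0 (volume.real Ω))) (nhds 0) := by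
      have : Continuous (fun A => 2 * α * |A - A₀| / b) := by fun_prop
      have h := (this.tendsto A₀).mono_left (nhdsWithin_le_nhds (s := Set.Icc 0 (volume.real Ω)))
      simpa using h
    refine squeeze_zero' (Filter.Eventually.of_forall fun _ => dist_nonneg) ?_ hlim
    have hnear : ∀ᶠ A in nhdsWithin A₀ (Set.Icc 0 (volume.real Ω)), |A - A₀| < b / 2 :=
      nhdsWithin_le_nhds (by
        exact Metric.ball_mem_nhds A₀ (half_pos hb0))
    filter_upwards [hnear, self_mem_nhdsWithin] with A hA1 hA2
    rw [Real.dist_eq]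
    rcases le_total A₀ A with h | h
    · have m := Lam_mono hn hne hΩo hΩb hα hA₀.1 h hA2.2
      rw [abs_of_nonneg (sub_nonneg.2 h)] at hA1 ⊢
      have l := Lam_lip hn hne hΩo hΩb hα hA₀.1 h hlt hA1.le
      rw [abs_of_nonneg (sub_nonneg.2 m)]
      linarith
    · have m := Lam_mono hn hne hΩo hΩb hα hA2.1 h hA₀.2
      rw [abs_sub_comm, abs_of_nonneg (sub_nonneg.2 m)]
      rw [abs_sub_comm, abs_of_nonneg (sub_nonneg.2 h)] at hA1 ⊢
      have l := Lam_lip hn hne hΩo hΩb hα hA2.1 h (h.trans_lt hlt) (by linarith)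
      have : 2 * α * (A₀ - A) / (volume.real Ω - A) ≤ 2 * α * (A₀ - A) / b := by
        have : 0 ≤ A₀ - A := sub_nonneg.2 h
        gcongr
        linarith
      linarith
  · subst heq
    obtain ⟨C, e, he, H⟩ := Lam_end hn hne hΩo hΩb hα
    have hK : Filter.Tendsto (fun A => α * (C * (volume.real Ω - A) ^ e))
        (nhdsWithin (volume.real Ω) (Set.Icc 0 (volume.real Ω))) (nhds 0) := by
      have : Continuous (fun A => α * (C * (volume.real Ω - A) ^ e)) := by
        have : Continuous (fun A => (volume.real Ω - A) ^ e) :=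
          (continuous_const.sub continuous_id).rpow_const fun _ => Or.inr he.le
        fun_prop
      have h := (this.tendsto (volume.real Ω)).mono_left
        (nhdsWithin_le_nhds (s := Set.Icc 0 (volume.real Ω)))
      simpa [Real.zero_rpow he.ne'] using h
    have hlow : Filter.Tendsto (fun A => Lam Ω α (volume.real Ω) -
        α * (C * (volume.real Ω - A) ^ e) * (Lam Ω α (volume.real Ω) - α + 1))
        (nhdsWithin (volume.real Ω) (Set.Icc 0 (volume.real Ω)))
        (nhds (Lam Ω α (volume.real Ω))) := by
      simpa using (hK.mul_const (Lam Ω α (volume.real Ω) - α + 1)).const_sub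
        (Lam Ω α (volume.real Ω))
    refine tendsto_of_tendsto_of_tendsto_of_le_of_le' hlow tendsto_const_nhds ?_ ?_
    · filter_upwards [hK.eventually_le_const zero_lt_one, self_mem_nhdsWithin] with A h1 h2
      exact H A h2.1 h2.2 h1
    · filter_upwards [self_mem_nhdsWithin] with A h2
      exact Lam_mono hn hne hΩo hΩb hα h2.1 h2.2 le_rfl

end Main

/-- For every `α > 0`, the map `A ↦ Λ(α,A)` is non-decreasing and continuous on `[0,|Ω|]`. -/
theorem statement8 {n : ℕ} (hn : 2 ≤ n) (Ω : Set (EuclideanSpace ℝ (Fin n)))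
    (hne : Ω.Nonempty) (hΩo : IsOpen Ω) (hΩb : Bornology.IsBounded Ω)
    (α : ℝ) (hα : 0 < α) :
    MonotoneOn (fun A => Lam Ω α A) (Set.Icc (0 : ℝ) (volume Ω).toReal) ∧
    ContinuousOn (fun A => Lam Ω α A) (Set.Icc (0 : ℝ) (volume Ω).toReal) := by
  exact ⟨fun A hA B hB hAB => Lam_mono hn hne hΩo hΩb hα hA.1 hAB hB.2,
    main_cont hn hne hΩo hΩb hα⟩
end
end

section
/- Let B be the open unit ball of ℝⁿ, let 𝓗 ⊆ ℝⁿ be a closed half-space with 0 in the interior of 𝓗, let 0 ≤ h < H and t ≥ 0, and let u : ℝⁿ → ℝ be continuous with u > 0 on B and u = 0 on ℝⁿ ∖ B. Let ρ_{u_𝓗} be the density associated to the polarization u_𝓗. Let w : ℝⁿ → [0,∞) be measurable, square-integrable on B, vanishing outside B, and satisfying: (i) w(x) ≥ w(x̄) for every x ∈ 𝓗; (ii) w(x) ≥ u_𝓗(x) for every x ∈ 𝓗; (iii) w(x) + w(x̄) ≥ u_𝓗(x) + u_𝓗(x̄) for every x ∈ ℝⁿ. Then ∫_B ρ_{u_𝓗}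 u_𝓗 w ≤ ∫_B ρ_{u_𝓗} w². -/
open MeasureTheory ENNReal RealInnerProductSpace

noncomputable section

/-- Reflection of `x` across the hyperplane `{y : ⟪y,e⟫ = c}` (the boundary of the closed
half-space `𝓗 = {y : ⟪y,e⟫ ≤ c}`, for a unit vector `e`). -/
def reflH {n : ℕ} (e : EuclideanSpace ℝ (Fin n)) (c : ℝ) (x : EuclideanSpace ℝ (Fin n)) :
    EuclideanSpace ℝ (Fin n) :=
  x - (2 * (⟪x, e⟫ - c)) • e

/-- Polarization of `v : ℝⁿ → ℝ` relative to the closed half-space `𝓗 = {y : ⟪y,e⟫ ≤ c}`: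
`v_𝓗(x) = max{v(x), v(x̄)}` for `x ∈ 𝓗` and `v_𝓗(x) = min{v(x), v(x̄)}` for `x ∉ 𝓗`. -/
def polarize {n : ℕ} (e : EuclideanSpace ℝ (Fin n)) (c : ℝ)
    (v : EuclideanSpace ℝ (Fin n) → ℝ) (x : EuclideanSpace ℝ (Fin n)) : ℝ :=
  if ⟪x, e⟫ ≤ c then max (v x) (v (reflH e c x)) else min (v x) (v (reflH e c x))

/-- The two-valued density associated to `v`: `ρ_v(x) = h` if `v(x) ≤ √t`, `ρ_v(x) = H`
if `v(x) > √t`. -/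
def rhoD {n : ℕ} (h H t : ℝ) (v : EuclideanSpace ℝ (Fin n) → ℝ)
    (x : EuclideanSpace ℝ (Fin n)) : ℝ :=
  if v x ≤ Real.sqrt t then h else H

lemma inner_reflH {n : ℕ} (e : EuclideanSpace ℝ (Fin n)) (he : ‖e‖ = 1) (c : ℝ)
    (x : EuclideanSpace ℝ (Fin n)) : ⟪reflH e c x, e⟫ = 2 * c - ⟪x, e⟫ := by
  have hee : ⟪e, e⟫ = (1 : ℝ) := by rw [real_inner_self_eq_norm_sq, he]; norm_num
  unfold reflH
  rw [inner_sub_left, real_inner_smul_left, hee]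
  ring

lemma reflH_reflH {n : ℕ} (e : EuclideanSpace ℝ (Fin n)) (he : ‖e‖ = 1) (c : ℝ)
    (x : EuclideanSpace ℝ (Fin n)) : reflH e c (reflH e c x) = x := by
  have h := inner_reflH e he c x
  have h' : reflH e c (reflH e c x)
      = reflH e c x - (2 * (⟪reflH e c x, e⟫ - c)) • e := rfl
  rw [h', h]
  unfold reflH
  module

lemma mp_reflH {n : ℕ} (e : EuclideanSpace ℝ (Fin n)) (he : ‖e‖ = 1) (c : ℝ) :
    MeasurePreserving (reflH e c) volume volume := by
  have h1 : MeasurePreserving ((ℝ ∙ e)ᗮ.reflection) volume volume :=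
    LinearIsometryEquiv.measurePreserving _
  have h2 := (measurePreserving_add_right
    (volume : Measure (EuclideanSpace ℝ (Fin n))) ((2 * c) • e)).comp h1
  convert h2 using 1
  funext x
  simp only [Function.comp]
  rw [Submodule.reflection_orthogonal_apply, Submodule.reflection_singleton_apply, he,
    real_inner_comm]
  unfold reflH
  simp
  module

lemma pair_ineq (a b W w' r r' : ℝ) (hr' : 0 ≤ r') (hr : r' ≤ r) (hw' : 0 ≤ w')
    (h1 : w' ≤ W) (h2 : a ≤ W) (h3 : a + b ≤ W + w') :
    0 ≤ r * W * (W - a) + r' * w' * (w' - b) := by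
  have hA : r' * w' ≤ r * W := by gcongr; exact hr'.trans hr
  have hB : 0 ≤ r' * w' := by positivity
  have h4 : r' * w' * (W - a) ≤ r * W * (W - a) :=
    mul_le_mul_of_nonneg_right hA (by linarith)
  have h5 : 0 ≤ r' * w' * ((W - a) + (w' - b)) := mul_nonneg hB (by linarith)
  linarith [mul_add (r' * w') (W - a) (w' - b)]

/-- Key integral inequality: if `w ≥ 0` is measurable, square-integrable on the unit ball `B`,
vanishing outside `B`, and satisfies (i) `w(x) ≥ w(x̄)` for `x ∈ 𝓗`, (ii) `w(x) ≥ u_𝓗(x)` for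
`x ∈ 𝓗`, (iii) `w(x)+w(x̄) ≥ u_𝓗(x)+u_𝓗(x̄)` for all `x`, then
`∫_B ρ_{u_𝓗} u_𝓗 w ≤ ∫_B ρ_{u_𝓗} w²`. -/
theorem statement14 {n : ℕ} (e : EuclideanSpace ℝ (Fin n)) (he : ‖e‖ = 1) (c : ℝ) (hc : 0 < c)
    (h H t : ℝ) (hh : 0 ≤ h) (hH : h < H) (ht : 0 ≤ t)
    (u : EuclideanSpace ℝ (Fin n) → ℝ) (hcont : Continuous u)
    (hupos : ∀ x ∈ Metric.ball (0 : EuclideanSpace ℝ (Fin n)) 1, 0 < u x)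
    (hu0 : ∀ x ∉ Metric.ball (0 : EuclideanSpace ℝ (Fin n)) 1, u x = 0)
    (w : EuclideanSpace ℝ (Fin n) → ℝ) (hwm : Measurable w) (hw0 : ∀ x, 0 ≤ w x)
    (hwL2 : IntegrableOn (fun x => w x ^ 2) (Metric.ball (0 : EuclideanSpace ℝ (Fin n)) 1))
    (hwout : ∀ x ∉ Metric.ball (0 : EuclideanSpace ℝ (Fin n)) 1, w x = 0)
    (h1 : ∀ x : EuclideanSpace ℝ (Fin n), ⟪x, e⟫ ≤ c → w (reflH e c x) ≤ w x)
    (h2 : ∀ x : EuclideanSpace ℝ (Fin n), ⟪x, e⟫ ≤ c → polarize e c u x ≤ w x)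
    (h3 : ∀ x : EuclideanSpace ℝ (Fin n),
      polarize e c u x + polarize e c u (reflH e c x) ≤ w x + w (reflH e c x)) :
    ∫ x in Metric.ball (0 : EuclideanSpace ℝ (Fin n)) 1,
        rhoD h H t (polarize e c u) x * polarize e c u x * w x
      ≤ ∫ x in Metric.ball (0 : EuclideanSpace ℝ (Fin n)) 1,
        rhoD h H t (polarize e c u) x * w x ^ 2 := by
  classical
  set B := Metric.ball (0 : EuclideanSpace ℝ (Fin n)) 1 with hB
  set p := polarize e c u with hp
  set ρ := rhoD h H t p with hρ
  have hmp := mp_reflH e he c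
  have hum : Measurable u := hcont.measurable
  have hurm : Measurable (fun x => u (reflH e c x)) := hum.comp hmp.measurable
  have hpm : Measurable p := by
    have hs : MeasurableSet {x : EuclideanSpace ℝ (Fin n) | ⟪x, e⟫ ≤ c} :=
      measurableSet_le (by fun_prop) measurable_const
    exact Measurable.ite hs (hum.max hurm) (hum.min hurm)
  have hρm : Measurable ρ :=
    Measurable.ite (measurableSet_le hpm measurable_const) measurable_const measurable_const
  have hρ0 : ∀ x, 0 ≤ ρ x := by
    intro x
    simp only [hρ, rhoD]
    split_ifs <;> linarith
  have hρH : ∀ x, ‖ρ x‖ ≤ H := by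
    intro x
    rw [Real.norm_of_nonneg (hρ0 x)]
    simp only [hρ, rhoD]
    split_ifs <;> linarith
  have hρmono : ∀ x y, p x ≤ p y → ρ x ≤ ρ y := by
    intro x y hxy
    simp only [hρ, rhoD]
    split_ifs <;> linarith
  obtain ⟨C, hC⟩ : ∃ C, ∀ x, ‖u x‖ ≤ C := by
    refine hcont.bounded_above_of_compact_support ?_
    refine HasCompactSupport.intro (isCompact_closedBall (0 : EuclideanSpace ℝ (Fin n)) 1) ?_
    intro x hx
    exact hu0 x (fun h' => hx (Metric.ball_subset_closedBall h'))
  have hpC : ∀ x, ‖p x‖ ≤ C := by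
    intro x
    have ha := abs_le.1 (hC x)
    have hb := abs_le.1 (hC (reflH e c x))
    rw [Real.norm_eq_abs, abs_le]
    simp only [hp, polarize]
    split_ifs
    · exact ⟨ha.1.trans (le_max_left _ _), max_le ha.2 hb.2⟩
    · exact ⟨le_min ha.1 hb.1, (min_le_left _ _).trans ha.2⟩
  have hBf : volume B ≠ ∞ := measure_ball_lt_top.ne
  haveI : IsFiniteMeasure (volume.restrict B) := ⟨by simpa using hBf.lt_top⟩
  have hwi : IntegrableOn w B :=
    ((memLp_two_iff_integrable_sq hwm.aestronglyMeasurable).2 hwL2).integrable (by norm_num)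
  have hi2 : IntegrableOn (fun x => ρ x * w x ^ 2) B :=
    hwL2.bdd_mul hρm.aestronglyMeasurable (Filter.Eventually.of_forall hρH)
  have hi1 : IntegrableOn (fun x => ρ x * p x * w x) B := by
    refine Integrable.bdd_mul (c := H * C) hwi (hρm.mul hpm).aestronglyMeasurable
      (Filter.Eventually.of_forall fun x => ?_)
    rw [norm_mul]
    exact mul_le_mul (hρH x) (hpC x) (norm_nonneg _) (by linarith)
  rw [← sub_nonneg, ← integral_sub hi2 hi1]
  set F : EuclideanSpace ℝ (Fin n) → ℝ := fun x => ρ x * w x ^ 2 - ρ x * p x * w x with hF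
  have hFout : ∀ x, x ∉ B → F x = 0 := by
    intro x hx
    simp [hF, hwout x hx]
  have hFi : Integrable F :=
    (integrableOn_iff_integrable_of_support_subset (s := B) (by
      intro x hx
      by_contra hxB
      exact hx (hFout x hxB))).1 (hi2.sub hi1)
  rw [setIntegral_eq_integral_of_forall_compl_eq_zero hFout]
  have hemb : MeasurableEmbedding (reflH e c) :=
    (MeasurableEquiv.mk ⟨reflH e c, reflH e c, reflH_reflH e he c, reflH_reflH e he c⟩
      hmp.measurable hmp.measurable).measurableEmbedding
  have hFr : ∫ x, F (reflH e c x) = ∫ x, F x := hmp.integral_comp hemb F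
  have hFri : Integrable (fun x => F (reflH e c x)) := hmp.integrable_comp_of_integrable hFi
  have key : ∀ x, ⟪x, e⟫ ≤ c → 0 ≤ F x + F (reflH e c x) := by
    intro x hx
    have hpp : p (reflH e c x) ≤ p x := by
      have e1 : p x = max (u x) (u (reflH e c x)) := if_pos hx
      by_cases hy : ⟪reflH e c x, e⟫ ≤ c
      · have e2 : p (reflH e c x) = max (u (reflH e c x)) (u (reflH e c (reflH e c x))) :=
          if_pos hy
        rw [e1, e2, reflH_reflH e he, max_comm]
      · have e2 : p (reflH e c x) = min (u (reflH e c x)) (u (reflH e c (reflH e c x))) :=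
          if_neg hy
        rw [e1, e2, reflH_reflH e he]
        exact (min_le_left _ _).trans (le_max_right _ _)
    have := pair_ineq (p x) (p (reflH e c x)) (w x) (w (reflH e c x)) (ρ x) (ρ (reflH e c x))
      (hρ0 _) (hρmono _ _ hpp) (hw0 _) (h1 x hx) (h2 x hx) (h3 x)
    refine this.trans (le_of_eq ?_)
    simp only [hF]
    ring
  have hall : ∀ x, 0 ≤ F x + F (reflH e c x) := by
    intro x
    by_cases hx : ⟪x, e⟫ ≤ c
    · exact key x hx
    · have := key (reflH e c x) (by rw [inner_reflH e he]; linarith [not_le.1 hx])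
      rw [reflH_reflH e he] at this
      linarith
  have hsum : 0 ≤ ∫ x, (F x + F (reflH e c x)) := integral_nonneg hall
  rw [integral_add hFi hFri, hFr] at hsum
  linarith
end
end
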